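/- arXiv:2011.10331 — 3 statements merged into one kernel-verified Lean document; each statement's English description precedes it below -/
import Mathlib

section
/- Let θ > 0 and let B ∈ ℝ^{n×m}. Then the function B ↦ ‖B‖_θ is differentiable at every B, and its gradient is the matrix D_B B; that is, for every i ∈ {1,…,n} and j ∈ {1,…,m}, the partial derivative of ‖·‖_θ at B with respect to the entry B_{i,j} equals D_{B,i} · B_{i,j}, where D_{B,i} = (2 + θ(‖B_{i,:}‖₂ + 2) + θ²‖B_{i,:}‖₂) / (θ²‖B_{i,:}‖₂² + 2θ‖B_{i,:}‖₂ + 1). -/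
open Finset

/-- The Euclidean norm of the `i`-th row of a matrix `B`. -/
noncomputable def rowNorm {n m : ℕ} (B : Fin n → Fin m → ℝ) (i : Fin n) : ℝ :=
  Real.sqrt (∑ j, B i j ^ 2)

/-- The `θ`-norm `‖B‖_θ = ∑ i, (1+θ)‖B_{i,:}‖₂² / (1 + θ‖B_{i,:}‖₂)`. -/
noncomputable def thetaNorm {n m : ℕ} (θ : ℝ) (B : Fin n → Fin m → ℝ) : ℝ :=
  ∑ i, (1 + θ) * rowNorm B i ^ 2 / (1 + θ * rowNorm B i)

/-- The diagonal entries of the matrix `D_B`. -/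
noncomputable def Dentry {n m : ℕ} (θ : ℝ) (B : Fin n → Fin m → ℝ) (i : Fin n) : ℝ :=
  (2 + θ * (rowNorm B i + 2) + θ ^ 2 * rowNorm B i) /
    (θ ^ 2 * rowNorm B i ^ 2 + 2 * θ * rowNorm B i + 1)

/-- scalar profile in terms of the squared row norm -/
noncomputable def gAux (θ s : ℝ) : ℝ := (1 + θ) * s / (1 + θ * Real.sqrt s)

lemma gAux_hasDerivAt (θ : ℝ) (hθ : 0 < θ) (s : ℝ) (hs : 0 ≤ s) :
    HasDerivAt (gAux θ) ((2 + θ * (Real.sqrt s + 2) + θ ^ 2 * Real.sqrt s) /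
      (θ ^ 2 * Real.sqrt s ^ 2 + 2 * θ * Real.sqrt s + 1) / 2) s := by
  rcases hs.eq_or_lt with h | h
  · subst h
    rw [hasDerivAt_iff_tendsto_slope]
    have hc : ContinuousAt (fun t : ℝ => (1 + θ) / (1 + θ * Real.sqrt t)) 0 := by
      apply ContinuousAt.div
      · fun_prop
      · fun_prop
      · simp
    have h2 : Filter.Tendsto (fun t : ℝ => (1 + θ) / (1 + θ * Real.sqrt t))
        (nhdsWithin 0 {0}ᶜ) (nhds ((1 + θ) / (1 + θ * Real.sqrt 0))) :=
      hc.tendsto.mono_left nhdsWithin_le_nhds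
    have e : (2 + θ * (Real.sqrt 0 + 2) + θ ^ 2 * Real.sqrt 0) /
      (θ ^ 2 * Real.sqrt 0 ^ 2 + 2 * θ * Real.sqrt 0 + 1) / 2
        = (1 + θ) / (1 + θ * Real.sqrt 0) := by
      simp; ring
    rw [e]
    refine h2.congr' ?_
    filter_upwards [self_mem_nhdsWithin] with t ht
    have ht' : t ≠ 0 := ht
    have hp : 1 + θ * Real.sqrt t ≠ 0 := by positivity
    simp only [slope_def_field, gAux]
    field_simp
    simp
  · have hp : 1 + θ * Real.sqrt s ≠ 0 := by positivity
    have hr : 0 < Real.sqrt s := Real.sqrt_pos.mpr h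
    have h1 := (((hasDerivAt_id s).const_mul (1 + θ)).div
      (((Real.hasDerivAt_sqrt h.ne').const_mul θ).const_add 1) hp)
    refine h1.congr_deriv ?_
    have hq : s = Real.sqrt s ^ 2 := (Real.sq_sqrt hs).symm
    simp only [id]
    generalize Real.sqrt s = r at *
    subst hq
    have : θ ^ 2 * r ^ 2 + 2 * θ * r + 1 ≠ 0 := by positivity
    field_simp
    ring

lemma thetaNorm_eq {n m : ℕ} (θ : ℝ) (B : Fin n → Fin m → ℝ) :
    thetaNorm θ B = ∑ i, gAux θ (∑ j, B i j ^ 2) := by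
  unfold thetaNorm gAux rowNorm
  refine Finset.sum_congr rfl fun i _ => ?_
  rw [Real.sq_sqrt (Finset.sum_nonneg fun j _ => sq_nonneg _)]

/-- For `θ > 0`, the `θ`-norm is differentiable at every `B`, and its partial derivative with
respect to the entry `B i j` equals `(D_B)_{i,i} * B i j`, i.e. the gradient is `D_B • B`. -/
theorem stmt_0 {n m : ℕ} (θ : ℝ) (hθ : 0 < θ) (B : Fin n → Fin m → ℝ) :
    DifferentiableAt ℝ (thetaNorm θ) B ∧
    ∀ (i : Fin n) (j : Fin m),
      HasDerivAt
        (fun t : ℝ => thetaNorm θ (Function.update B i (Function.update (B i) j t)))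
        (Dentry θ B i * B i j) (B i j) := by
  have hnn : ∀ i, 0 ≤ ∑ j, B i j ^ 2 := fun i => Finset.sum_nonneg fun j _ => sq_nonneg _
  constructor
  · have : thetaNorm (n := n) (m := m) θ = fun B => ∑ i, gAux θ (∑ j, B i j ^ 2) :=
      funext (thetaNorm_eq θ)
    rw [this]
    refine DifferentiableAt.fun_sum fun i _ => ?_
    exact DifferentiableAt.comp (g := gAux θ) (f := fun B : Fin n → Fin m → ℝ => ∑ j, B i j ^ 2) B
      (gAux_hasDerivAt θ hθ _ (hnn i)).differentiableAt (by fun_prop)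
  · intro i j
    simp only [thetaNorm_eq]
    have key : ∀ k ∈ (Finset.univ : Finset (Fin n)), HasDerivAt
        (fun t : ℝ => gAux θ (∑ l, (Function.update B i (Function.update (B i) j t)) k l ^ 2))
        (if k = i then Dentry θ B i * B i j else 0) (B i j) := by
      intro k _
      by_cases hk : k = i
      · subst hk
        simp only [Function.update_self, if_true]
        have hin : HasDerivAt (fun t : ℝ => ∑ l, (Function.update (B k) j t) l ^ 2)
            (∑ l, if l = j then 2 * B k j else 0) (B k j) := by
          refine HasDerivAt.fun_sum fun l _ => ?_
          by_cases hl : l = j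
          · subst hl
            simpa using hasDerivAt_pow 2 (B k l)
          · simpa [hl] using hasDerivAt_const (B k j) (B k l ^ 2)
        have hg := gAux_hasDerivAt θ hθ _ (hnn k)
        have hval : ∑ l, B k l ^ 2 = ∑ l, (Function.update (B k) j (B k j)) l ^ 2 := by simp
        rw [hval] at hg
        refine (HasDerivAt.comp (B k j) hg hin).congr_deriv ?_
        rw [← hval]
        simp only [Finset.sum_ite_eq', Finset.mem_univ, if_true, Dentry, rowNorm]
        ring
      · simpa [hk] using hasDerivAt_const (B i j) (gAux θ (∑ l, B k l ^ 2))
    refine (HasDerivAt.fun_sum key).congr_deriv ?_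
    simp
end

section
/- Let θ > 0. Then the function B ↦ ‖B‖_θ on ℝ^{n×m} is convex. -/
open Finset

lemma rowNorm_eq {n m : ℕ} (B : Fin n → Fin m → ℝ) (i : Fin n) :
    rowNorm B i = ‖(WithLp.toLp 2 (B i) : EuclideanSpace ℝ (Fin m))‖ := by
  simp [rowNorm, EuclideanSpace.norm_eq]

lemma rowNorm_conv {n m : ℕ} (A B : Fin n → Fin m → ℝ) (i : Fin n) (a b : ℝ)
    (ha : 0 ≤ a) (hb : 0 ≤ b) :
    rowNorm (a • A + b • B) i ≤ a * rowNorm A i + b * rowNorm B i := by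
  rw [rowNorm_eq, rowNorm_eq, rowNorm_eq]
  have h : (WithLp.toLp 2 ((a • A + b • B) i) : EuclideanSpace ℝ (Fin m))
      = a • WithLp.toLp 2 (A i) + b • WithLp.toLp 2 (B i) := by
    ext j; simp
  rw [h]
  refine (norm_add_le _ _).trans ?_
  rw [norm_smul, norm_smul, Real.norm_of_nonneg ha, Real.norm_of_nonneg hb]

lemma tangent_le (θ s x : ℝ) (hθ : 0 < θ) (hx : 0 ≤ x) :
    2 * s * x - s ^ 2 * (1 + θ * x) ≤ x ^ 2 / (1 + θ * x) := by
  have hp : 0 < 1 + θ * x := by positivity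
  rw [le_div_iff₀ hp]
  nlinarith [sq_nonneg (x - s * (1 + θ * x))]

lemma scalar_ineq (θ x y z a b : ℝ) (hθ : 0 < θ) (hx : 0 ≤ x) (hy : 0 ≤ y) (hz : 0 ≤ z)
    (ha : 0 ≤ a) (hb : 0 ≤ b) (hab : a + b = 1) (h : z ≤ a * x + b * y) :
    z ^ 2 / (1 + θ * z) ≤ a * (x ^ 2 / (1 + θ * x)) + b * (y ^ 2 / (1 + θ * y)) := by
  have hp : 0 < 1 + θ * z := by positivity
  obtain ⟨s, hs⟩ : ∃ s, s = z / (1 + θ * z) := ⟨_, rfl⟩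
  have hs0 : 0 ≤ s := by rw [hs]; positivity
  have hsz : s * (1 + θ * z) = z := by rw [hs]; field_simp
  have hs1 : s * θ ≤ 1 := by
    rw [hs, div_mul_eq_mul_div, div_le_one hp]; linarith
  have e : z ^ 2 / (1 + θ * z) = 2 * s * z - s ^ 2 * (1 + θ * z) := by
    have e1 : z ^ 2 / (1 + θ * z) = s * z := by rw [hs]; ring
    rw [e1]; linear_combination s * hsz
  have h1 := mul_le_mul_of_nonneg_left (tangent_le θ s x hθ hx) ha
  have h2 := mul_le_mul_of_nonneg_left (tangent_le θ s y hθ hy) hb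
  have h3 : 0 ≤ s * (2 - s * θ) * (a * x + b * y - z) :=
    mul_nonneg (mul_nonneg hs0 (by linarith)) (by linarith)
  have hb' : b = 1 - a := by linarith
  subst hb'
  rw [e]
  nlinarith

/-- For `θ > 0`, the function `B ↦ ‖B‖_θ` on `ℝ^{n×m}` is convex. -/
theorem stmt_3 {n m : ℕ} (θ : ℝ) (hθ : 0 < θ) :
    ConvexOn ℝ Set.univ (thetaNorm θ : (Fin n → Fin m → ℝ) → ℝ) := by
  refine ⟨convex_univ, ?_⟩
  intro A _ B _ a b ha hb hab
  simp only [thetaNorm, smul_eq_mul, Finset.mul_sum]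
  rw [← Finset.sum_add_distrib]
  refine Finset.sum_le_sum fun i _ => ?_
  have h := scalar_ineq θ (rowNorm A i) (rowNorm B i) (rowNorm (a • A + b • B) i) a b hθ
    (Real.sqrt_nonneg _) (Real.sqrt_nonneg _) (Real.sqrt_nonneg _) ha hb hab
    (rowNorm_conv A B i a b ha hb)
  have h' := mul_le_mul_of_nonneg_left h (by linarith : (0:ℝ) ≤ 1 + θ)
  simp only [mul_div_assoc]
  linarith
end

section
/- Let θ > 0 and s ≥ 0, and define f_θ(s) = (1+θ)s²/(1+θs). Then min(s, s²) ≤ f_θ(s) ≤ max(s, s²). Consequently, for any matrix B ∈ ℝ^{n×m} all of whose rows satisfy ‖B_{i,:}‖₂ ≤ 1, one has ‖B‖_F² ≤ ‖B‖_θ ≤ ‖B‖_{2,1}. -/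
open Finset

/-- For `θ > 0` and `s ≥ 0`, `min(s,s²) ≤ f_θ(s) ≤ max(s,s²)` where
`f_θ(s) = (1+θ)s²/(1+θs)`. Consequently, for any matrix `B` all of whose rows satisfy
`‖B_{i,:}‖₂ ≤ 1`, one has `‖B‖_F² ≤ ‖B‖_θ ≤ ‖B‖_{2,1}`. -/
theorem stmt_11 {n m : ℕ} (θ : ℝ) (hθ : 0 < θ) :
    (∀ s : ℝ, 0 ≤ s →
      min s (s ^ 2) ≤ (1 + θ) * s ^ 2 / (1 + θ * s) ∧
        (1 + θ) * s ^ 2 / (1 + θ * s) ≤ max s (s ^ 2)) ∧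
    ∀ B : Fin n → Fin m → ℝ, (∀ i, rowNorm B i ≤ 1) →
      (∑ i, ∑ j, B i j ^ 2) ≤ thetaNorm θ B ∧ thetaNorm θ B ≤ ∑ i, rowNorm B i := by
  have key : ∀ s : ℝ, 0 ≤ s →
      min s (s ^ 2) ≤ (1 + θ) * s ^ 2 / (1 + θ * s) ∧
        (1 + θ) * s ^ 2 / (1 + θ * s) ≤ max s (s ^ 2) := by
    intro s hs
    have hd : 0 < 1 + θ * s := by positivity
    rw [le_div_iff₀ hd, div_le_iff₀ hd]
    rcases le_total s 1 with h | h
    · have h1 : s ^ 2 ≤ s := by nlinarith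
      have h2 : 0 ≤ θ * s ^ 2 * (1 - s) := mul_nonneg (by positivity) (by linarith)
      rw [min_eq_right h1, max_eq_left h1]
      constructor <;> nlinarith
    · have h1 : s ≤ s ^ 2 := by nlinarith
      have h2 : 0 ≤ θ * s ^ 2 * (s - 1) := mul_nonneg (by positivity) (by linarith)
      rw [min_eq_left h1, max_eq_right h1]
      constructor <;> nlinarith
  refine ⟨key, fun B hB => ?_⟩
  have h0 : ∀ i, 0 ≤ rowNorm B i := fun i => Real.sqrt_nonneg _
  have hle : ∀ i, rowNorm B i ^ 2 ≤ rowNorm B i := fun i => by nlinarith [h0 i, hB i]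
  have hsq : ∀ i, rowNorm B i ^ 2 = ∑ j, B i j ^ 2 := fun i =>
    Real.sq_sqrt (Finset.sum_nonneg fun j _ => sq_nonneg _)
  unfold thetaNorm
  constructor
  · refine Finset.sum_le_sum fun i _ => ?_
    have h := (key _ (h0 i)).1
    rw [min_eq_right (hle i)] at h
    rw [← hsq i]
    exact h
  · refine Finset.sum_le_sum fun i _ => ?_
    have h := (key _ (h0 i)).2
    rw [max_eq_left (hle i)] at h
    exact h
end
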